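/- Let X be a measurable space, C a countable concept class of measurable functions X → {0,1} with VC dimension at most d, c ∈ C a fixed target concept, D a probability measure on X, and α, β ∈ (0,1). If n ≥ (64/α)·(d·ln(64/α) + ln(8/β)), then for a sample x₁,…,x_n drawn i.i.d. from D, the probability that there exists h ∈ C with error_D(c,h) > α and error_S(h) ≤ α/2 (where S = ((x_i, c(x_i)))_{i=1}^n) is at most β. -/

import Mathlib

open MeasureTheory

/-- A concept class `C` shatters a finite set `A` if every Boolean labeling of `A`
is realized by some concept in `C`. -/
def Shatters {X : Type*} (C : Set (X → Bool)) (A : Finset X) : Prop :=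
  ∀ f : X → Bool, ∃ c ∈ C, ∀ x ∈ A, c x = f x

/-! Replacing every `h ∈ C` by its disagreement `h xor c` with the target reduces the claim to a
one-sided deviation bound for a class `C`: no `f ∈ C` of measure more than `α` may hit only
`n α / 2` of the sample points. By Chebyshev, such an `f` hits at least `7 n α / 8` points of an
independent ghost sample with probability at least `1 / 2`. The `2 n` points of both samples may be
dealt to the two samples by a fair coin for each pair without changing the joint law. For fixed
points and a fixed trace of `f`, the inequality `cosh x ≤ exp (x² / 2)` shows that an imbalance as
large as `n α / 2` against `7 n α / 8` has probability at most `exp (-9 n α / 176)`, and the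
Sauer–Shelah lemma bounds the number of traces. -/

open ProbabilityTheory Finset

section Traces

variable {X κ : Type*} [Fintype κ]

open Classical in
/-- The traces of the class `C` on a finite family of points `w`: the sets of indices `i` at which
some `f ∈ C` takes the value `true` on `w i`. Their number is what the growth function of `C`
bounds. -/
noncomputable def conceptTraces (C : Set (X → Bool)) (w : κ → X) : Finset (Finset κ) :=
  {a | ∃ f ∈ C, a = ({i | f (w i)} : Finset κ)}

lemma mem_conceptTraces {C : Set (X → Bool)} {w : κ → X} {a : Finset κ} :
    a ∈ conceptTraces C w ↔ ∃ f ∈ C, a = ({i | f (w i)} : Finset κ) := by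
  simp [conceptTraces]

lemma exists_concept_of_shatters_conceptTraces [DecidableEq κ] {C : Set (X → Bool)} {w : κ → X}
    {s t : Finset κ} (hs : (conceptTraces C w).Shatters s) (ht : t ⊆ s) :
    ∃ f ∈ C, ∀ i ∈ s, f (w i) = true ↔ i ∈ t := by
  obtain ⟨a, ha, rfl⟩ := hs ht
  obtain ⟨f, hf, rfl⟩ := mem_conceptTraces.1 ha
  exact ⟨f, hf, fun i hi => by simp [hi]⟩

lemma injOn_of_shatters_conceptTraces [DecidableEq κ] {C : Set (X → Bool)} {w : κ → X}
    {s : Finset κ} (hs : (conceptTraces C w).Shatters s) : Set.InjOn w s := by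
  intro i hi j hj hij
  obtain ⟨f, -, hf⟩ :=
    exists_concept_of_shatters_conceptTraces hs (singleton_subset_iff.2 hi)
  have hfj : f (w j) = true := hij ▸ (hf i hi).2 (mem_singleton_self i)
  exact (mem_singleton.1 ((hf j hj).1 hfj)).symm

lemma shatters_image_of_shatters_conceptTraces [DecidableEq X] [DecidableEq κ]
    {C : Set (X → Bool)} {w : κ → X} {s : Finset κ} (hs : (conceptTraces C w).Shatters s) :
    Shatters C (s.image w) := by
  intro g
  obtain ⟨f, hfC, hf⟩ :=
    exists_concept_of_shatters_conceptTraces hs (filter_subset (fun i => g (w i) = true) s)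
  refine ⟨f, hfC, forall_mem_image.2 fun i hi => Bool.eq_iff_iff.2 ?_⟩
  simp [hf i hi, hi]

theorem card_conceptTraces_le {C : Set (X → Bool)} {d : ℕ}
    (hVC : ∀ A : Finset X, Shatters C A → #A ≤ d) (w : κ → X) :
    #(conceptTraces C w) ≤ ∑ k ∈ Iic d, (Fintype.card κ).choose k := by
  classical
  have hdim : (conceptTraces C w).vcDim ≤ d := by
    refine Finset.sup_le fun s hs => ?_
    rw [mem_shatterer] at hs
    rw [← card_image_of_injOn (injOn_of_shatters_conceptTraces hs)]
    exact hVC _ (shatters_image_of_shatters_conceptTraces hs)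
  calc #(conceptTraces C w) ≤ #(conceptTraces C w).shatterer := card_le_card_shatterer _
    _ ≤ ∑ k ∈ Iic (conceptTraces C w).vcDim, (Fintype.card κ).choose k :=
      card_shatterer_le_sum_vcDim
    _ ≤ ∑ k ∈ Iic d, (Fintype.card κ).choose k :=
      sum_le_sum_of_subset (Iic_subset_Iic.2 hdim)

lemma shatters_of_shatters_xor {C : Set (X → Bool)} (c : X → Bool) {A : Finset X}
    (hA : Shatters ((fun h x => h x ^^ c x) '' C) A) : Shatters C A := by
  intro g
  obtain ⟨_, ⟨h, hh, rfl⟩, hg⟩ := hA fun x => g x ^^ c x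
  exact ⟨h, hh, fun x hx => by simpa using hg x hx⟩

end Traces

section RandomSigns

variable {ι : Type*} [Fintype ι] [DecidableEq ι]

lemma exp_swap_add_exp_swap_le {p q : ℝ} (hp : p ∈ Set.Icc 0 1) (hq : q ∈ Set.Icc 0 1) (l : ℝ) :
    Real.exp (l * (p - q) - l ^ 2 / 2 * (p + q)) + Real.exp (l * (q - p) - l ^ 2 / 2 * (q + p))
      ≤ 2 := by
  have hsq : (p - q) ^ 2 ≤ p + q := by nlinarith [hp.1, hp.2, hq.1, hq.2, mul_nonneg hp.1 hq.1]
  have hcosh : 2 * Real.cosh (l * (p - q)) =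
      Real.exp (l * (p - q)) + Real.exp (l * (q - p)) := by
    rw [Real.cosh_eq, ← mul_neg, neg_sub]; ring
  calc _ = 2 * Real.cosh (l * (p - q)) * Real.exp (-(l ^ 2 / 2 * (p + q))) := by
        rw [hcosh, add_mul, ← Real.exp_add, ← Real.exp_add, add_comm q p]
        simp only [sub_eq_add_neg]
    _ ≤ 2 * Real.exp ((l * (p - q)) ^ 2 / 2) * Real.exp (-(l ^ 2 / 2 * (p + q))) := by
        gcongr; exact Real.cosh_le_exp_half_sq _
    _ = 2 * Real.exp (l ^ 2 / 2 * ((p - q) ^ 2 - (p + q))) := by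
        rw [mul_assoc, ← Real.exp_add]; ring_nf
    _ ≤ 2 * 1 := by
        gcongr
        exact Real.exp_le_one_iff.2
          (mul_nonpos_of_nonneg_of_nonpos (by positivity) (sub_nonpos.2 hsq))
    _ = 2 := mul_one 2

lemma sum_exp_swap_le {y : ι → Bool → ℝ} (hy : ∀ i b, y i b ∈ Set.Icc 0 1) (l : ℝ) :
    ∑ σ : ι → Bool, Real.exp (l * (∑ i, y i (!σ i) - ∑ i, y i (σ i))
      - l ^ 2 / 2 * (∑ i, y i (!σ i) + ∑ i, y i (σ i))) ≤ 2 ^ Fintype.card ι := by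
  calc _ = ∑ σ : ι → Bool, ∏ i, Real.exp (l * (y i (!σ i) - y i (σ i))
        - l ^ 2 / 2 * (y i (!σ i) + y i (σ i))) := by
        simp only [← Real.exp_sum, sum_sub_distrib, ← mul_sum, sum_add_distrib]
    _ = ∏ i, ∑ b, Real.exp (l * (y i (!b) - y i b) - l ^ 2 / 2 * (y i (!b) + y i b)) :=
        (Fintype.prod_sum fun i b => Real.exp (l * (y i (!b) - y i b)
          - l ^ 2 / 2 * (y i (!b) + y i b))).symm
    _ ≤ ∏ _i : ι, (2 : ℝ) := by
        refine prod_le_prod (fun i _ => by positivity) fun i _ => ?_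
        rw [Fintype.sum_bool]
        exact exp_swap_add_exp_swap_le (hy i false) (hy i true) l
    _ = 2 ^ Fintype.card ι := by simp

-- Markov's inequality for `sum_exp_swap_le`, at the optimal `l = (v - u) / (u + v)`.
theorem card_swap_imbalance_le {y : ι → Bool → ℝ} (hy : ∀ i b, y i b ∈ Set.Icc 0 1) {u v : ℝ}
    (hu : 0 ≤ u) (huv : u < v) :
    (#{σ : ι → Bool | ∑ i, y i (σ i) ≤ u ∧ v ≤ ∑ i, y i (!σ i)} : ℝ)
      ≤ Real.exp (-((v - u) ^ 2 / (2 * (u + v)))) * 2 ^ Fintype.card ι := by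
  have huv0 : 0 < u + v := by linarith
  set l := (v - u) / (u + v) with hl
  have hl0 : 0 ≤ l := div_nonneg (by linarith) huv0.le
  have hl1 : l ≤ 1 := (div_le_one huv0).2 (by linarith)
  have hrate : l * (v - u) - l ^ 2 / 2 * (v + u) = (v - u) ^ 2 / (2 * (u + v)) := by
    rw [hl]; field_simp; ring
  have hmarkov (p q : ℝ) (hp : p ≤ u) (hq : v ≤ q) :
      (v - u) ^ 2 / (2 * (u + v)) ≤ l * (q - p) - l ^ 2 / 2 * (q + p) := by
    have h₁ : 0 ≤ (l - l ^ 2 / 2) * (q - v) := mul_nonneg (by nlinarith) (by linarith)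
    have h₂ : 0 ≤ (l + l ^ 2 / 2) * (u - p) := mul_nonneg (by positivity) (by linarith)
    rw [← hrate]
    linarith
  rw [Real.exp_neg, ← div_eq_inv_mul, le_div_iff₀ (Real.exp_pos _), ← nsmul_eq_mul]
  refine (card_nsmul_le_sum _ _ _ fun σ hσ => ?_).trans <|
    (sum_le_sum_of_subset_of_nonneg (subset_univ _) fun _ _ _ => (Real.exp_pos _).le).trans
      (sum_exp_swap_le hy l)
  obtain ⟨hp, hq⟩ := (mem_filter.1 hσ).2
  exact Real.exp_le_exp.2 (hmarkov _ _ hp hq)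

end RandomSigns

section HitCount

variable {X ι : Type*} [Fintype ι]

/-- The number of points of the sample `x` on which `f` takes the value `true`; for `f = h xor c` it
is `n` times the empirical error of `h` on the sample labeled by `c`. -/
def hitCount (f : X → Bool) (x : ι → X) : ℕ :=
  #{i | f (x i)}

lemma cast_hitCount (f : X → Bool) (x : ι → X) :
    (hitCount f x : ℝ) = ∑ i, {y | f y = true}.indicator 1 (x i) := by
  simp [hitCount, Set.indicator_apply]

variable [MeasurableSpace X] {f : X → Bool}

lemma measurableSet_eq_true (hf : Measurable f) : MeasurableSet {y | f y = true} :=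
  hf (measurableSet_singleton true)

lemma measurable_cast_hitCount (hf : Measurable f) :
    Measurable fun x : ι → X => (hitCount f x : ℝ) := by
  simp only [cast_hitCount]
  exact Finset.measurable_sum _ fun i _ =>
    (measurable_one.indicator (measurableSet_eq_true hf)).comp (measurable_pi_apply i)

variable (D : Measure X) [IsProbabilityMeasure D]

lemma memLp_indicator_eq_true (hf : Measurable f) :
    MemLp ({y | f y = true}.indicator (1 : X → ℝ)) 2 D :=
  (memLp_const 1).indicator (measurableSet_eq_true hf)

lemma integral_hitCount (hf : Measurable f) :
    ∫ x, (hitCount f x : ℝ) ∂Measure.pi (fun _ : ι => D)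
      = Fintype.card ι * D.real {y | f y = true} := by
  have hint := (memLp_indicator_eq_true D hf).integrable one_le_two
  simp only [cast_hitCount]
  rw [integral_finsetSum _ fun i _ => integrable_comp_eval hint]
  simp [integral_comp_eval (μ := fun _ : ι => D) hint.aestronglyMeasurable,
    integral_indicator_one (measurableSet_eq_true hf)]

lemma memLp_hitCount (hf : Measurable f) :
    MemLp (fun x : ι → X => (hitCount f x : ℝ)) 2 (Measure.pi fun _ => D) := by
  simp only [cast_hitCount]
  exact memLp_finsetSum _ fun i _ =>
    (memLp_indicator_eq_true D hf).comp_measurePreserving (measurePreserving_eval _ i)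

lemma variance_hitCount_le (hf : Measurable f) :
    Var[fun x : ι → X => (hitCount f x : ℝ); Measure.pi fun _ => D]
      ≤ Fintype.card ι * D.real {y | f y = true} := by
  set g := {y | f y = true}.indicator (1 : X → ℝ)
  have hg : MemLp g 2 D := memLp_indicator_eq_true D hf
  have hsum : (fun x : ι → X => (hitCount f x : ℝ)) = ∑ i, fun x => g (x i) := by
    ext x; simp [cast_hitCount, g]
  have hvar : Var[g; D] ≤ D.real {y | f y = true} := by
    calc Var[g; D] ≤ D[g ^ 2] := variance_le_expectation_sq hg.aestronglyMeasurable
      _ = D[g] := by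
        congr 1; ext y; simp [g, Set.indicator_apply]
      _ = D.real {y | f y = true} := integral_indicator_one (measurableSet_eq_true hf)
  rw [hsum, variance_sum_pi fun _ => hg]
  simpa using mul_le_mul_of_nonneg_left hvar (Nat.cast_nonneg (Fintype.card ι))

theorem half_le_measureReal_le_hitCount (hf : Measurable f) {t : ℝ} (ht : 128 ≤ t)
    (htf : t ≤ Fintype.card ι * D.real {y | f y = true}) :
    1 / 2 ≤ (Measure.pi fun _ : ι => D).real {x | 7 / 8 * t ≤ hitCount f x} := by
  set μ := Measure.pi fun _ : ι => D
  set m := Fintype.card ι * D.real {y | f y = true}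
  have hsub : {x : ι → X | 7 / 8 * t ≤ hitCount f x}ᶜ
      ⊆ {x | m / 8 ≤ |(hitCount f x : ℝ) - ∫ x, (hitCount f x : ℝ) ∂μ|} := by
    intro x hx
    have hx : (hitCount f x : ℝ) < 7 / 8 * t := not_le.1 hx
    rw [Set.mem_ofPred_eq, integral_hitCount D hf, abs_sub_comm]
    exact le_trans (by linarith) (le_abs_self _)
  have hvar : Var[fun x : ι → X => (hitCount f x : ℝ); μ] / (m / 8) ^ 2 ≤ 1 / 2 := by
    calc _ ≤ m / (m / 8) ^ 2 := by gcongr; exact variance_hitCount_le D hf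
      _ ≤ 1 / 2 := by rw [div_le_iff₀ (by nlinarith)]; nlinarith
  have hcompl : μ.real {x | 7 / 8 * t ≤ hitCount f x}ᶜ ≤ 1 / 2 :=
    ENNReal.toReal_le_of_le_ofReal (by norm_num) <|
      (measure_mono hsub).trans <|
      (meas_ge_le_variance_div_sq (memLp_hitCount D hf) (by linarith)).trans
        (ENNReal.ofReal_le_ofReal hvar)
  rw [probReal_compl_eq_one_sub
    (measurableSet_le measurable_const (measurable_cast_hitCount hf))] at hcompl
  linarith

end HitCount

section Symmetrization

lemma mul_measureReal_le_measureReal_prod {Ω Ω' : Type*} [MeasurableSpace Ω] [MeasurableSpace Ω']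
    (μ : Measure Ω) (ν : Measure Ω') [IsFiniteMeasure μ] [IsFiniteMeasure ν] {A : Set Ω}
    {B : Set (Ω × Ω')} (hB : MeasurableSet B) {r : ℝ} (hr : 0 ≤ r)
    (hA : ∀ x ∈ A, r ≤ ν.real (Prod.mk x ⁻¹' B)) :
    r * μ.real A ≤ (μ.prod ν).real B := by
  have hint : Integrable (fun x => ν.real (Prod.mk x ⁻¹' B)) μ :=
    Measure.integrable_measure_prodMk_left hB (measure_ne_top _ _)
  calc r * μ.real A ≤ r * μ.real {x | r ≤ ν.real (Prod.mk x ⁻¹' B)} := by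
        gcongr
        · finiteness
        · exact hA
    _ ≤ ∫ x, ν.real (Prod.mk x ⁻¹' B) ∂μ :=
        mul_meas_ge_le_integral_of_nonneg (ae_of_all _ fun _ => measureReal_nonneg) hint r
    _ = (μ.prod ν).real B := by
        rw [measureReal_def, Measure.prod_apply hB,
          ← integral_toReal (measurable_measure_prodMk_left hB).aemeasurable
            (ae_of_all _ fun _ => measure_lt_top _ _)]
        rfl

lemma measureReal_le_of_forall_card_le {Ω Ω' S : Type*} [MeasurableSpace Ω] [MeasurableSpace Ω']
    [Fintype S] [Nonempty S] {μ : Measure Ω} {ν : Measure Ω'} [IsProbabilityMeasure μ]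
    {T : S → Ω → Ω'} (hT : ∀ s, MeasurePreserving (T s) μ ν) {B : Set Ω'} [DecidablePred (· ∈ B)]
    (hB : MeasurableSet B) {r : ℝ} (hr : ∀ ω, (#{s | T s ω ∈ B} : ℝ) ≤ r * Fintype.card S) :
    ν.real B ≤ r := by
  have hmeas (s : S) : MeasurableSet (T s ⁻¹' B) := (hT s).measurable hB
  have hind (s : S) : Integrable ((T s ⁻¹' B).indicator (1 : Ω → ℝ)) μ :=
    (integrable_const 1).indicator (hmeas s)
  have hcount (ω : Ω) : (#{s | T s ω ∈ B} : ℝ) = ∑ s, (T s ⁻¹' B).indicator 1 ω := by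
    simp [Set.indicator]
  have havg : ν.real B * Fintype.card S ≤ r * Fintype.card S := by
    calc ν.real B * Fintype.card S = ∑ s, ∫ ω, (T s ⁻¹' B).indicator (1 : Ω → ℝ) ω ∂μ := by
          simp [integral_indicator_one (hmeas _), mul_comm, measureReal_def,
            (hT _).measure_preimage hB.nullMeasurableSet]
      _ = ∫ ω, ∑ s, (T s ⁻¹' B).indicator (1 : Ω → ℝ) ω ∂μ :=
          (integral_finsetSum _ fun s _ => hind s).symm
      _ ≤ ∫ _, r * Fintype.card S ∂μ :=
          integral_mono (integrable_finsetSum _ fun s _ => hind s) (integrable_const _)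
            fun ω => (hcount ω).symm.trans_le (hr ω)
      _ = r * Fintype.card S := by simp
  exact le_of_mul_le_mul_right havg (by positivity)

variable {X ι : Type*}

/-- The double sample `w`, whose `i`-th pair of points is `w (i, false), w (i, true)`, split into
two samples: the signs `σ` tell which point of each pair goes to the first one. -/
def splitSample (σ : ι → Bool) (w : ι × Bool → X) : (ι → X) × (ι → X) :=
  (fun i => w (i, σ i), fun i => w (i, !σ i))

lemma measurePreserving_splitSample [Fintype ι] [MeasurableSpace X] (D : Measure X)
    [SigmaFinite D] (σ : ι → Bool) :
    MeasurePreserving (splitSample σ) (Measure.pi fun _ : ι × Bool => D)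
      ((Measure.pi fun _ : ι => D).prod (Measure.pi fun _ : ι => D)) := by
  let e : ι ⊕ ι ≃ ι × Bool :=
    { toFun := Sum.elim (fun i => (i, σ i)) (fun i => (i, !σ i))
      invFun := fun p => if p.2 = σ p.1 then Sum.inl p.1 else Sum.inr p.1
      left_inv := by rintro (i | i) <;> simp
      right_inv := by rintro ⟨i, b⟩; cases b <;> cases h : σ i <;> simp [h] }
  exact (measurePreserving_sumPiEquivProdPi fun _ => D).comp
    ((measurePreserving_piCongrLeft (fun _ => D) e).symm _)

/-- The bad event for a sample and a ghost sample: some `f ∈ C` hits at most `u` points of the first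
one and at least `v` points of the second one. -/
def deviationEvent [Fintype ι] (C : Set (X → Bool)) (u v : ℝ) : Set ((ι → X) × (ι → X)) :=
  {z | ∃ f ∈ C, hitCount f z.1 ≤ u ∧ v ≤ hitCount f z.2}

variable [Fintype ι]

lemma measurableSet_deviationEvent [MeasurableSpace X] {C : Set (X → Bool)} (hC : C.Countable)
    (hCmeas : ∀ f ∈ C, Measurable f) (u v : ℝ) :
    MeasurableSet (deviationEvent C u v : Set ((ι → X) × (ι → X))) := by
  have hunion : (deviationEvent C u v : Set ((ι → X) × (ι → X))) =
      ⋃ f ∈ C, {z | hitCount f z.1 ≤ u ∧ v ≤ hitCount f z.2} := by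
    ext z; simp only [deviationEvent, Set.mem_iUnion, exists_prop]; rfl
  rw [hunion]
  refine MeasurableSet.biUnion hC fun f hf => ?_
  have hmeas := measurable_cast_hitCount (ι := ι) (hCmeas f hf)
  exact (measurableSet_le (hmeas.comp measurable_fst) measurable_const).inter
    (measurableSet_le measurable_const (hmeas.comp measurable_snd))

open Classical in
lemma card_splitSample_mem_deviationEvent_le [DecidableEq ι] {C : Set (X → Bool)}
    {d : ℕ} (hVC : ∀ A : Finset X, Shatters C A → #A ≤ d) {u v : ℝ} (hu : 0 ≤ u) (huv : u < v)
    (w : ι × Bool → X) :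
    (#{σ | splitSample σ w ∈ deviationEvent C u v} : ℝ)
      ≤ (∑ k ∈ Iic d, (2 * Fintype.card ι).choose k : ℕ)
        * Real.exp (-((v - u) ^ 2 / (2 * (u + v)))) * 2 ^ Fintype.card ι := by
  let y (a : Finset (ι × Bool)) (i : ι) (b : Bool) : ℝ := if (i, b) ∈ a then 1 else 0
  let Q (a : Finset (ι × Bool)) : Finset (ι → Bool) :=
    {σ | ∑ i, y a i (σ i) ≤ u ∧ v ≤ ∑ i, y a i (!σ i)}
  have hsub : ({σ | splitSample σ w ∈ deviationEvent C u v} : Finset (ι → Bool))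
      ⊆ (conceptTraces C w).biUnion Q := by
    intro σ hσ
    obtain ⟨f, hf, hσ⟩ := (mem_filter.1 hσ).2
    refine mem_biUnion.2 ⟨_, mem_conceptTraces.2 ⟨f, hf, rfl⟩, mem_filter.2 ⟨mem_univ _, ?_⟩⟩
    have hcount (τ : ι → Bool) :
        ∑ i, y {p | f (w p)} i (τ i) = hitCount f fun i => w (i, τ i) := by
      simp [y, cast_hitCount, Set.indicator_apply]
    rwa [hcount σ, hcount fun i => !σ i]
  have hQ (a : Finset (ι × Bool)) : (#(Q a) : ℝ)
      ≤ Real.exp (-((v - u) ^ 2 / (2 * (u + v)))) * 2 ^ Fintype.card ι :=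
    card_swap_imbalance_le (fun i b => by simp only [y]; split_ifs <;> simp) hu huv
  have htraces : #(conceptTraces C w) ≤ ∑ k ∈ Iic d, (2 * Fintype.card ι).choose k := by
    simpa [mul_comm 2] using card_conceptTraces_le hVC w
  calc (#{σ | splitSample σ w ∈ deviationEvent C u v} : ℝ)
      ≤ ∑ a ∈ conceptTraces C w, (#(Q a) : ℝ) := by
        exact_mod_cast (card_le_card hsub).trans card_biUnion_le
    _ ≤ #(conceptTraces C w)
          * (Real.exp (-((v - u) ^ 2 / (2 * (u + v)))) * 2 ^ Fintype.card ι) := by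
        simpa only [nsmul_eq_mul] using sum_le_card_nsmul _ _ _ fun a _ => hQ a
    _ ≤ _ := by rw [mul_assoc]; gcongr

variable [MeasurableSpace X] {C : Set (X → Bool)} {d : ℕ} (D : Measure X) [IsProbabilityMeasure D]

theorem measureReal_deviationEvent_le (hC : C.Countable) (hCmeas : ∀ f ∈ C, Measurable f)
    (hVC : ∀ A : Finset X, Shatters C A → #A ≤ d) {u v : ℝ} (hu : 0 ≤ u) (huv : u < v) :
    ((Measure.pi fun _ : ι => D).prod (Measure.pi fun _ : ι => D)).real (deviationEvent C u v)
      ≤ (∑ k ∈ Iic d, (2 * Fintype.card ι).choose k : ℕ)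
        * Real.exp (-((v - u) ^ 2 / (2 * (u + v)))) := by
  classical
  refine measureReal_le_of_forall_card_le (measurePreserving_splitSample D)
    (measurableSet_deviationEvent hC hCmeas u v) fun w => ?_
  simpa using card_splitSample_mem_deviationEvent_le hVC hu huv w

theorem measureReal_exists_hitCount_le_half (hC : C.Countable) (hCmeas : ∀ f ∈ C, Measurable f)
    (hVC : ∀ A : Finset X, Shatters C A → #A ≤ d) {t : ℝ} (ht : 128 ≤ t) :
    (Measure.pi fun _ : ι => D).real {x | ∃ f ∈ C,
        t ≤ Fintype.card ι * D.real {y | f y = true} ∧ hitCount f x ≤ t / 2}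
      ≤ 2 * (∑ k ∈ Iic d, (2 * Fintype.card ι).choose k : ℕ) * Real.exp (-(9 / 176 * t)) := by
  have hghost := mul_measureReal_le_measureReal_prod (Measure.pi fun _ : ι => D)
    (Measure.pi fun _ : ι => D) (measurableSet_deviationEvent hC hCmeas (t / 2) (7 / 8 * t))
    one_half_pos.le (A := {x | ∃ f ∈ C,
        t ≤ Fintype.card ι * D.real {y | f y = true} ∧ hitCount f x ≤ t / 2}) <| by
      rintro x ⟨f, hf, hmean, hx⟩
      exact (half_le_measureReal_le_hitCount D (hCmeas f hf) ht hmean).trans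
        (measureReal_mono fun x' hx' => ⟨f, hf, hx, hx'⟩)
  have hsymm := measureReal_deviationEvent_le (ι := ι) D hC hCmeas hVC
    (u := t / 2) (v := 7 / 8 * t) (by linarith) (by linarith)
  have hrate : (7 / 8 * t - t / 2) ^ 2 / (2 * (t / 2 + 7 / 8 * t)) = 9 / 176 * t := by
    field_simp; ring
  rw [hrate] at hsymm
  linarith

end Symmetrization

section SampleSize

lemma sum_choose_le_inv_pow_mul_exp (m d : ℕ) {y : ℝ} (hy₀ : 0 < y) (hy₁ : y ≤ 1) :
    ((∑ k ∈ Iic d, m.choose k : ℕ) : ℝ) ≤ y⁻¹ ^ d * Real.exp (m * y) := by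
  have hterm : ∀ k ∈ Iic d, (m.choose k : ℝ) * y ^ d ≤ m.choose k * y ^ k := fun k hk =>
    mul_le_mul_of_nonneg_left (pow_le_pow_of_le_one hy₀.le hy₁ (mem_Iic.1 hk)) (by positivity)
  have hbinom : ∑ k ∈ Iic d, (m.choose k : ℝ) * y ^ k ≤ (y + 1) ^ m := by
    calc _ ≤ ∑ k ∈ Iic d ∪ range (m + 1), (m.choose k : ℝ) * y ^ k :=
          sum_le_sum_of_subset_of_nonneg subset_union_left fun _ _ _ => by positivity
      _ = ∑ k ∈ range (m + 1), (m.choose k : ℝ) * y ^ k := by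
          refine (sum_subset subset_union_right fun k _ hk => ?_).symm
          rw [Nat.choose_eq_zero_of_lt (by simpa using hk), Nat.cast_zero, zero_mul]
      _ = (y + 1) ^ m := by simp [add_pow, mul_comm]
  have hexp : (y + 1) ^ m ≤ Real.exp (m * y) := by
    rw [Real.exp_nat_mul]
    exact pow_le_pow_left₀ (by positivity) (Real.add_one_le_exp y) m
  rw [inv_pow, ← div_eq_inv_mul, le_div_iff₀ (by positivity)]
  push_cast
  rw [sum_mul]
  exact (sum_le_sum hterm).trans (hbinom.trans hexp)

lemma two_le_log_eight_div {β : ℝ} (hβ : β ∈ Set.Ioo (0 : ℝ) 1) : 2 ≤ Real.log (8 / β) := by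
  have hlog8 : Real.log 8 = 3 * Real.log 2 := by
    rw [show (8 : ℝ) = 2 ^ 3 by norm_num, Real.log_pow]; norm_num
  have hle : Real.log 8 ≤ Real.log (8 / β) :=
    Real.log_le_log (by norm_num) ((le_div_iff₀ hβ.1).2 (by linarith [hβ.2]))
  linarith [Real.log_two_gt_d9]

lemma two_mul_sum_choose_mul_exp_le {α β : ℝ} {n d : ℕ} (hα₀ : 0 < α) (hα₁ : α ≤ 64) (hβ : 0 < β)
    (hn : 64 * (d * Real.log (64 / α) + Real.log (8 / β)) ≤ n * α) :
    2 * (∑ k ∈ Iic d, (2 * n).choose k : ℕ) * Real.exp (-(9 / 176 * (n * α))) ≤ β := by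
  have hnα : 0 ≤ n * α := by positivity
  have hchoose := sum_choose_le_inv_pow_mul_exp (2 * n) d (y := α / 64) (by positivity)
    (by linarith)
  have hpow : (α / 64)⁻¹ ^ d = Real.exp (d * Real.log (64 / α)) := by
    rw [Real.exp_nat_mul, Real.exp_log (by positivity), inv_div]
  have hβexp : β / 8 = Real.exp (-Real.log (8 / β)) := by
    rw [Real.exp_neg, Real.exp_log (by positivity), inv_div]
  calc _ ≤ 2 * ((α / 64)⁻¹ ^ d * Real.exp ((2 * n : ℕ) * (α / 64)))
        * Real.exp (-(9 / 176 * (n * α))) := by gcongr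
    _ = 2 * Real.exp (d * Real.log (64 / α) + n * α / 32 - 9 / 176 * (n * α)) := by
        rw [hpow, mul_assoc, ← Real.exp_add, ← Real.exp_add]
        push_cast
        ring_nf
    _ ≤ 2 * Real.exp (-Real.log (8 / β)) := by
        gcongr
        linarith
    _ ≤ β := by linarith

end SampleSize

theorem stmt2_general {X : Type*} [MeasurableSpace X] (C : Set (X → Bool)) (hC : C.Countable)
    (hCmeas : ∀ h ∈ C, Measurable h) (d : ℕ)
    (hVC : ∀ A : Finset X, Shatters C A → A.card ≤ d)
    (c : X → Bool) (hc : Measurable c) (D : Measure X) [IsProbabilityMeasure D]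
    (α β : ℝ) (hα : α ∈ Set.Ioo (0 : ℝ) 1) (hβ : β ∈ Set.Ioo (0 : ℝ) 1)
    (n : ℕ) (hn : 64 / α * (d * Real.log (64 / α) + Real.log (8 / β)) ≤ n) :
    Measure.pi (fun _ : Fin n => D)
        {x | ∃ h ∈ C, α < (D {y | h y ≠ c y}).toReal ∧
          ((Finset.univ.filter fun i => h (x i) ≠ c (x i)).card : ℝ) / n ≤ α / 2}
      ≤ ENNReal.ofReal β := by
  set C' : Set (X → Bool) := (fun h y => h y ^^ c y) '' C
  have hC'meas : ∀ f ∈ C', Measurable f := Set.forall_mem_image.2 fun h hh =>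
    (Measurable.of_discrete (f := fun b : Bool × Bool => b.1 ^^ b.2)).comp
      ((hCmeas h hh).prodMk hc)
  have hlog : 0 ≤ d * Real.log (64 / α) := mul_nonneg d.cast_nonneg <|
    Real.log_nonneg ((one_le_div hα.1).2 (by linarith [hα.2]))
  rw [div_mul_eq_mul_div, div_le_iff₀ hα.1] at hn
  have hnα : 128 ≤ n * α := by linarith [two_le_log_eight_div hβ]
  have hn₀ : (0 : ℝ) < n := pos_of_mul_pos_left (by linarith) hα.1.le
  have hsize := two_mul_sum_choose_mul_exp_le hα.1 (by linarith [hα.2]) hβ.1 hn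
  have hbound := (measureReal_exists_hitCount_le_half (ι := Fin n) D (hC.image _) hC'meas
    (fun A hA => hVC A (shatters_of_shatters_xor c hA)) hnα).trans (by simpa using hsize)
  refine (measure_mono ?_).trans
    ((ENNReal.le_ofReal_iff_toReal_le (measure_ne_top _ _) hβ.1.le).2 hbound)
  rintro x ⟨h, hh, hα', hx⟩
  refine ⟨_, Set.mem_image_of_mem _ hh, ?_, ?_⟩
  · simpa [Measure.real] using mul_le_mul_of_nonneg_left hα'.le hn₀.le
  · rw [div_le_iff₀ hn₀] at hx
    have hx' : (#{i | h (x i) ≠ c (x i)} : ℝ) ≤ n * α / 2 := by linarith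
    simpa [hitCount] using hx'

/-- VC generalization bound: if `C` is a countable class of measurable concepts with VC
dimension at most `d`, `c ∈ C` is the target, `D` is a probability measure, and
`n ≥ (64/α)(d ln(64/α) + ln(8/β))`, then the probability (over an i.i.d. sample of size `n`
from `D`) that some `h ∈ C` has generalization error `> α` but empirical error `≤ α/2`
is at most `β`. -/
theorem stmt2 {X : Type*} [MeasurableSpace X] (C : Set (X → Bool)) (hC : C.Countable)
    (hCmeas : ∀ h ∈ C, Measurable h) (d : ℕ)
    (hVC : ∀ A : Finset X, Shatters C A → A.card ≤ d)
    (c : X → Bool) (hc : c ∈ C) (D : Measure X) [IsProbabilityMeasure D]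
    (α β : ℝ) (hα : α ∈ Set.Ioo (0 : ℝ) 1) (hβ : β ∈ Set.Ioo (0 : ℝ) 1)
    (n : ℕ) (hn : 64 / α * (d * Real.log (64 / α) + Real.log (8 / β)) ≤ n) :
    Measure.pi (fun _ : Fin n => D)
        {x | ∃ h ∈ C, α < (D {y | h y ≠ c y}).toReal ∧
          ((Finset.univ.filter fun i => h (x i) ≠ c (x i)).card : ℝ) / n ≤ α / 2}
      ≤ ENNReal.ofReal β := by
  exact stmt2_general C hC hCmeas d hVC c (hCmeas c hc) D α β hα hβ n hn
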